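/- Let I ⊆ ℝ be a closed bounded interval and f : I → I a continuous map admitting no 2-cycle. Then f is universal for the first Sharkovsky class if and only if there exists a point p ∈ I with f(p) = p such that for every ε > 0 there exists δ > 0 with [p − δ, p + δ] ⊆ f([p, p + ε] ∩ I) and [p − δ, p + δ] ⊆ f([p − ε, p] ∩ I). -/

import Mathlib

/-- `f`, viewed as an interval map on `[a,b]`, is universal for the first Sharkovsky
class: every orbit pattern of any interval map with no 2-cycle occurs as an orbit
pattern of `f`. -/
def IsUniversalF1 (a b : ℝ) (f : ℝ → ℝ) : Prop :=
  ∀ c d : ℝ, c ≤ d → ∀ g : ℝ → ℝ,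
    ContinuousOn g (Set.Icc c d) →
    Set.MapsTo g (Set.Icc c d) (Set.Icc c d) →
    (¬ ∃ x ∈ Set.Icc c d, ∃ y ∈ Set.Icc c d, x ≠ y ∧ g x = y ∧ g y = x) →
    ∀ p ∈ Set.Icc c d, ∃ q ∈ Set.Icc a b,
      ∀ m n : ℕ, (g^[m] p < g^[n] p ↔ f^[m] q < f^[n] q)

/-- No 2-cycle on `[a,b]`. -/
def NoTwo (a b : ℝ) (f : ℝ → ℝ) : Prop :=
  ¬ ∃ x ∈ Set.Icc a b, ∃ y ∈ Set.Icc a b, x ≠ y ∧ f x = y ∧ f y = x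

lemma no_two_sq {a b : ℝ} {f : ℝ → ℝ} (hf : ContinuousOn f (Set.Icc a b))
    (hm : Set.MapsTo f (Set.Icc a b) (Set.Icc a b)) (h2 : NoTwo a b f)
    {x : ℝ} (hx : x ∈ Set.Icc a b) (hlt : x < f x) : x < f (f x) := by
  by_contra hcon
  push Not at hcon
  have hff : ContinuousOn (fun t => f (f t)) (Set.Icc a b) := hf.comp hf hm
  -- it suffices to find `y ≤ x` with `y ≤ f (f y)` and `f > id` on `[y, x]`
  have key : ∀ y ∈ Set.Icc a x, y ≤ f (f y) → (∀ t ∈ Set.Icc y x, t < f t) → False := by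
    intro y hy hyy ht
    have hsub : Set.Icc y x ⊆ Set.Icc a b := Set.Icc_subset_Icc hy.1 hx.2
    have hc : ContinuousOn (fun t => f (f t) - t) (Set.Icc y x) :=
      (hff.mono hsub).sub continuousOn_id
    have := intermediate_value_Icc' hy.2 hc
    obtain ⟨z, hz, hz0⟩ := this (show (0 : ℝ) ∈ _ from ⟨by linarith, by linarith⟩)
    simp only [] at hz0
    exact h2 ⟨z, hsub hz, f z, hm (hsub hz), (ht z hz).ne, rfl, by linarith⟩
  by_cases hne : ∃ t ∈ Set.Icc a x, f t ≤ t
  · have hsub : Set.Icc a x ⊆ Set.Icc a b := Set.Icc_subset_Icc le_rfl hx.2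
    have hcl : IsClosed {t ∈ Set.Icc a x | f t ≤ t} :=
      isClosed_Icc.isClosed_le (hf.mono hsub) continuousOn_id
    have hcomp : IsCompact {t ∈ Set.Icc a x | f t ≤ t} :=
      isCompact_Icc.of_isClosed_subset hcl (fun t ht => ht.1)
    obtain ⟨u, ⟨hu, hfu⟩, hmax⟩ := hcomp.exists_isGreatest hne
    have hux : u < x := by
      rcases hu.2.lt_or_eq with h | h
      · exact h
      · subst h; linarith
    have hgt : ∀ t, u < t → t ≤ x → t < f t := by
      intro t h1 h3
      by_contra h4
      push Not at h4
      have := hmax ⟨⟨hu.1.trans h1.le, h3⟩, h4⟩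
      linarith
    have hcont := hf u (hsub hu)
    have hev : ∀ᶠ t in nhdsWithin u (Set.Icc a b), f t < x :=
      hcont.eventually (gt_mem_nhds (lt_of_le_of_lt hfu hux))
    have hev2 : ∀ᶠ t in nhdsWithin u (Set.Ioo u x), f t < x :=
      hev.filter_mono (nhdsWithin_mono _ (fun t (ht : t ∈ Set.Ioo u x) =>
        show t ∈ Set.Icc a b from ⟨hu.1.trans ht.1.le, ht.2.le.trans hx.2⟩))
    have : (nhdsWithin u (Set.Ioo u x)).NeBot := by
      rw [nhdsWithin_Ioo_eq_nhdsGT hux]; infer_instance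
    obtain ⟨y, hy1, hy2⟩ := (hev2.and self_mem_nhdsWithin).exists
    have h1 := hgt y hy2.1 hy2.2.le
    have h3 := hgt (f y) (hy2.1.trans h1) hy1.le
    exact key y ⟨hu.1.trans hy2.1.le, hy2.2.le⟩ (by linarith)
      (fun t ht => hgt t (lt_of_lt_of_le hy2.1 ht.1) ht.2)
  · push Not at hne
    have ha : a ∈ Set.Icc a b := ⟨le_rfl, hx.1.trans hx.2⟩
    exact key a ⟨le_rfl, hx.1⟩ (hm (hm ha)).1 hne

lemma iter_mem {a b : ℝ} {f : ℝ → ℝ}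
    (hm : Set.MapsTo f (Set.Icc a b) (Set.Icc a b)) {x : ℝ} (hx : x ∈ Set.Icc a b) (n : ℕ) :
    f^[n] x ∈ Set.Icc a b := hm.iterate n hx

/-- Coppel's lemma, upward version. -/
lemma coppel_up {a b : ℝ} {f : ℝ → ℝ} (hf : ContinuousOn f (Set.Icc a b))
    (hm : Set.MapsTo f (Set.Icc a b) (Set.Icc a b)) (h2 : NoTwo a b f)
    {x : ℝ} (hx : x ∈ Set.Icc a b) (hlt : x < f x) (n : ℕ) : x < f^[n + 1] x := by
  induction n using Nat.strong_induction_on with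
  | _ n ih =>
    by_contra hcon
    push Not at hcon
    rcases n with _ | n
    · simp at hcon; linarith
    have hmx := ih n (by omega)
    set m := f^[n + 1] x with hmdef
    rw [Function.iterate_succ_apply', ← hmdef] at hcon
    have hmI : m ∈ Set.Icc a b := iter_mem hm hx _
    have hsub : Set.Icc x m ⊆ Set.Icc a b := Set.Icc_subset_Icc hx.1 hmI.2
    have hbd : ∀ y ∈ Set.Icc x m, f y < m := by
      intro y hy
      by_contra h
      push Not at h
      obtain ⟨z, hz, hzm⟩ := intermediate_value_Icc' hy.2
        (hf.mono ((Set.Icc_subset_Icc hy.1 le_rfl).trans hsub))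
        (show m ∈ _ from ⟨by linarith, h⟩)
      have hzx : x ≤ z := hy.1.trans hz.1
      have hzm' : z < m := by
        rcases hz.2.lt_or_eq with h | h
        · exact h
        · subst h; linarith
      have := no_two_sq hf hm h2 (hsub ⟨hzx, hz.2⟩) (by rw [hzm]; exact hzm')
      rw [hzm] at this
      linarith
    have hall : ∀ i, i ≤ n → f^[i + 1] x < m := by
      intro i
      induction i with
      | zero => intro _; simpa using hbd x ⟨le_rfl, hmx.le⟩
      | succ i ihi =>
        intro hi
        rw [Function.iterate_succ_apply']
        exact hbd _ ⟨(ih i (by omega)).le, (ihi (by omega)).le⟩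
    exact lt_irrefl _ (hall n le_rfl)

/-- Coppel's lemma, downward version. -/
lemma coppel_down {a b : ℝ} {f : ℝ → ℝ} (hf : ContinuousOn f (Set.Icc a b))
    (hm : Set.MapsTo f (Set.Icc a b) (Set.Icc a b)) (h2 : NoTwo a b f)
    {x : ℝ} (hx : x ∈ Set.Icc a b) (hlt : f x < x) (n : ℕ) : f^[n + 1] x < x := by
  have hneg : ∀ t ∈ Set.Icc (-b) (-a), -t ∈ Set.Icc a b := fun t ht =>
    ⟨by linarith [ht.2], by linarith [ht.1]⟩
  have hit : ∀ n t, (fun t => -f (-t))^[n] t = -f^[n] (-t) := by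
    intro n
    induction n with
    | zero => intro t; simp
    | succ n ih => intro t; rw [Function.iterate_succ_apply', ih, Function.iterate_succ_apply']; simp
  have := coppel_up (a := -b) (b := -a) (f := fun t => -f (-t)) (x := -x)
    ((hf.comp continuousOn_id.neg hneg).neg)
    (fun t ht => ⟨by linarith [(hm (hneg t ht)).2], by linarith [(hm (hneg t ht)).1]⟩)
    (by
      rintro ⟨s, hs, t, ht, hst, h3, h4⟩
      refine h2 ⟨-s, hneg s hs, -t, hneg t ht, fun h => hst (by linarith), ?_, ?_⟩
      · simp only [] at h3; linarith
      · simp only [] at h4; linarith)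
    ⟨by linarith [hx.2], by linarith [hx.1]⟩ (by simpa using hlt) n
  rw [hit] at this
  simpa using this

/-- The order pattern is determined by the signs. -/
def HasSigns (s : ℕ → SignType) (x : ℕ → ℝ) : Prop :=
  ∀ m n, m < n → (s m = 1 → x m < x n) ∧ (s m = -1 → x n < x m) ∧ (s m = 0 → x m = x n)

lemma HasSigns.pattern {s : ℕ → SignType} {x y : ℕ → ℝ} (hx : HasSigns s x) (hy : HasSigns s y)
    (m n : ℕ) : x m < x n ↔ y m < y n := by
  have tri : ∀ t : SignType, t = 1 ∨ t = -1 ∨ t = 0 := by decide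
  rcases lt_trichotomy m n with h | h | h
  · obtain ⟨h1, h3, h4⟩ := hx m n h
    obtain ⟨k1, k3, k4⟩ := hy m n h
    rcases tri (s m) with e | e | e
    · exact ⟨fun _ => k1 e, fun _ => h1 e⟩
    · exact ⟨fun q => absurd q (h3 e).not_gt, fun q => absurd q (k3 e).not_gt⟩
    · simp [h4 e, k4 e]
  · subst h; simp
  · obtain ⟨h1, h3, h4⟩ := hx n m h
    obtain ⟨k1, k3, k4⟩ := hy n m h
    rcases tri (s n) with e | e | e
    · exact ⟨fun q => absurd q (h1 e).not_gt, fun q => absurd q (k1 e).not_gt⟩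
    · exact ⟨fun _ => k3 e, fun _ => h3 e⟩
    · simp [h4 e, k4 e]

lemma iter_fixed {f : ℝ → ℝ} {x : ℝ} {m : ℕ} (h : f (f^[m] x) = f^[m] x) {n : ℕ} (hn : m ≤ n) :
    f^[n] x = f^[m] x := by
  obtain ⟨k, rfl⟩ := Nat.exists_eq_add_of_le' hn
  rw [Function.iterate_add_apply]
  exact Function.iterate_fixed h k

lemma orbit_up {a b : ℝ} {f : ℝ → ℝ} (hf : ContinuousOn f (Set.Icc a b))
    (hm : Set.MapsTo f (Set.Icc a b) (Set.Icc a b)) (h2 : NoTwo a b f)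
    {x : ℝ} (hx : x ∈ Set.Icc a b) {m n : ℕ} (hmn : m < n) (h : f^[m] x < f (f^[m] x)) :
    f^[m] x < f^[n] x := by
  obtain ⟨k, rfl⟩ := Nat.exists_eq_add_of_lt hmn
  have := coppel_up hf hm h2 (iter_mem hm hx m) h k
  rw [← Function.iterate_add_apply] at this
  rwa [show m + k + 1 = k + 1 + m by ring]

lemma orbit_down {a b : ℝ} {f : ℝ → ℝ} (hf : ContinuousOn f (Set.Icc a b))
    (hm : Set.MapsTo f (Set.Icc a b) (Set.Icc a b)) (h2 : NoTwo a b f)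
    {x : ℝ} (hx : x ∈ Set.Icc a b) {m n : ℕ} (hmn : m < n) (h : f (f^[m] x) < f^[m] x) :
    f^[n] x < f^[m] x := by
  obtain ⟨k, rfl⟩ := Nat.exists_eq_add_of_lt hmn
  have := coppel_down hf hm h2 (iter_mem hm hx m) h k
  rw [← Function.iterate_add_apply] at this
  rwa [show m + k + 1 = k + 1 + m by ring]

lemma orbit_hasSigns {a b : ℝ} {f : ℝ → ℝ} (hf : ContinuousOn f (Set.Icc a b))
    (hm : Set.MapsTo f (Set.Icc a b) (Set.Icc a b)) (h2 : NoTwo a b f)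
    {x : ℝ} (hx : x ∈ Set.Icc a b) :
    HasSigns (fun n => SignType.sign (f (f^[n] x) - f^[n] x)) (fun n => f^[n] x) := by
  intro m n hmn
  refine ⟨fun h => ?_, fun h => ?_, fun h => ?_⟩
  · have h : SignType.sign (f (f^[m] x) - f^[m] x) = 1 := h
    rw [sign_eq_one_iff] at h
    exact orbit_up hf hm h2 hx hmn (by linarith)
  · have h : SignType.sign (f (f^[m] x) - f^[m] x) = -1 := h
    rw [sign_eq_neg_one_iff] at h
    exact orbit_down hf hm h2 hx hmn (by linarith)
  · have h : SignType.sign (f (f^[m] x) - f^[m] x) = 0 := h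
    rw [sign_eq_zero_iff] at h
    exact (iter_fixed (by linarith) hmn.le).symm

/-- The covering condition at `p`. -/
def Cov (a b : ℝ) (f : ℝ → ℝ) (p : ℝ) : Prop :=
  ∀ ε > (0 : ℝ), ∃ δ > (0 : ℝ),
    Set.Icc (p - δ) (p + δ) ⊆ f '' (Set.Icc p (p + ε) ∩ Set.Icc a b) ∧
    Set.Icc (p - δ) (p + δ) ⊆ f '' (Set.Icc (p - ε) p ∩ Set.Icc a b)

lemma cover_uIcc {a b : ℝ} {f : ℝ → ℝ} (hf : ContinuousOn f (Set.Icc a b)) {p u v : ℝ}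
    (hu : u ∈ Set.Icc a b) (hv : v ∈ Set.Icc a b) (h1 : f u < p) (h3 : p < f v) :
    ∃ θ > 0, Set.Icc (p - θ) (p + θ) ⊆ f '' Set.uIcc u v := by
  refine ⟨min (p - f u) (f v - p), lt_min (by linarith) (by linarith), ?_⟩
  have := intermediate_value_uIcc (hf.mono (Set.uIcc_subset_Icc hu hv))
  refine subset_trans ?_ this
  rw [Set.uIcc_of_le (by linarith)]
  exact Set.Icc_subset_Icc (by linarith [min_le_left (p - f u) (f v - p)])
    (by linarith [min_le_right (p - f u) (f v - p)])

lemma cov_pieces {a b : ℝ} {f : ℝ → ℝ} (hf : ContinuousOn f (Set.Icc a b)) {p : ℝ}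
    (hp : p ∈ Set.Icc a b) (hfp : f p = p) (hc : Cov a b f p) (σ : SignType) (ε : ℝ) (hε : 0 < ε) :
    ∃ K : Set ℝ, ∃ θ > 0, IsCompact K ∧ K.Nonempty ∧ K ⊆ Set.Icc a b ∧
      K ⊆ Set.Icc (p - ε) (p + ε) ∧ (σ = 1 → K ⊆ Set.Iio p) ∧ (σ = -1 → K ⊆ Set.Ioi p) ∧
      (σ = 0 → K = {p}) ∧ (σ ≠ 0 → Set.Icc (p - θ) (p + θ) ⊆ f '' K) := by
  obtain ⟨δ, hδ, hR, hL⟩ := hc ε hε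
  have tri : σ = 1 ∨ σ = -1 ∨ σ = 0 := by revert σ; decide
  rcases tri with rfl | rfl | rfl
  · obtain ⟨u, ⟨hu, hu'⟩, hfu⟩ := hL (show p - δ ∈ _ from ⟨le_rfl, by linarith⟩)
    obtain ⟨v, ⟨hv, hv'⟩, hfv⟩ := hL (show p + δ ∈ _ from ⟨by linarith, le_rfl⟩)
    have hup : u < p := lt_of_le_of_ne hu.2 (by rintro rfl; linarith)
    have hvp : v < p := lt_of_le_of_ne hv.2 (by rintro rfl; linarith)
    obtain ⟨θ, hθ, hcov⟩ := cover_uIcc hf (p := p) hu' hv' (by linarith) (by linarith)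
    refine ⟨Set.uIcc u v, θ, hθ, isCompact_uIcc, Set.nonempty_uIcc, Set.uIcc_subset_Icc hu' hv',
      Set.uIcc_subset_Icc ⟨hu.1, by linarith⟩ ⟨hv.1, by linarith⟩, fun _ t ht => ?_,
      fun h => absurd h (by decide), fun h => absurd h (by decide), fun _ => hcov⟩
    exact lt_of_le_of_lt ht.2 (max_lt hup hvp)
  · obtain ⟨u, ⟨hu, hu'⟩, hfu⟩ := hR (show p - δ ∈ _ from ⟨le_rfl, by linarith⟩)
    obtain ⟨v, ⟨hv, hv'⟩, hfv⟩ := hR (show p + δ ∈ _ from ⟨by linarith, le_rfl⟩)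
    have hup : p < u := lt_of_le_of_ne hu.1 (by rintro rfl; linarith)
    have hvp : p < v := lt_of_le_of_ne hv.1 (by rintro rfl; linarith)
    obtain ⟨θ, hθ, hcov⟩ := cover_uIcc hf (p := p) hu' hv' (by linarith) (by linarith)
    refine ⟨Set.uIcc u v, θ, hθ, isCompact_uIcc, Set.nonempty_uIcc, Set.uIcc_subset_Icc hu' hv',
      Set.uIcc_subset_Icc ⟨by linarith, hu.2⟩ ⟨by linarith, hv.2⟩, fun h => absurd h (by decide),
      fun _ t ht => ?_, fun h => absurd h (by decide), fun _ => hcov⟩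
    exact lt_of_lt_of_le (lt_min hup hvp) ht.1
  · exact ⟨{p}, 1, one_pos, isCompact_singleton, Set.singleton_nonempty _,
      by simpa using hp, by simpa using hε.le, fun h => absurd h (by decide),
      fun h => absurd h (by decide), fun _ => rfl, fun h => absurd rfl h⟩

lemma shadow {a b : ℝ} {f : ℝ → ℝ} (hf : ContinuousOn f (Set.Icc a b))
    (hm : Set.MapsTo f (Set.Icc a b) (Set.Icc a b)) (K : ℕ → Set ℝ)
    (hK : ∀ n, IsCompact (K n)) (hne : ∀ n, (K n).Nonempty) (hsub : ∀ n, K n ⊆ Set.Icc a b)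
    (hcov : ∀ n, K (n + 1) ⊆ f '' K n) : ∃ q ∈ Set.Icc a b, ∀ n, f^[n] q ∈ K n := by
  have hback : ∀ n, ∀ y ∈ K n, ∃ x, f^[n] x = y ∧ ∀ i ≤ n, f^[i] x ∈ K i := by
    intro n
    induction n with
    | zero => intro y hy; exact ⟨y, rfl, fun i hi => by obtain rfl : i = 0 := by omega
                                                        exact hy⟩
    | succ n ih =>
      intro y hy
      obtain ⟨z, hz, rfl⟩ := hcov n hy
      obtain ⟨x, hx, hxi⟩ := ih z hz
      refine ⟨x, by rw [Function.iterate_succ_apply', hx], fun i hi => ?_⟩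
      rcases Nat.lt_or_ge n i with h | h
      · obtain rfl : i = n + 1 := by omega
        rw [Function.iterate_succ_apply', hx]; exact hy
      · exact hxi i h
  have hclosed : ∀ i, IsClosed (Set.Icc a b ∩ f^[i] ⁻¹' K i) := fun i =>
    (hf.iterate hm i).preimage_isClosed_of_isClosed isClosed_Icc (hK i).isClosed
  let S : ℕ → Set ℝ := fun n => ⋂ i ∈ Set.Iic n, (Set.Icc a b ∩ f^[i] ⁻¹' K i)
  have hScl : ∀ n, IsClosed (S n) := fun n => isClosed_biInter fun i _ => hclosed i
  have hmem : ∀ n x, x ∈ S n ↔ ∀ i ≤ n, x ∈ Set.Icc a b ∧ f^[i] x ∈ K i := by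
    intro n x; simp [S]
  obtain ⟨q, hq⟩ := IsCompact.nonempty_iInter_of_sequence_nonempty_isCompact_isClosed S
    (fun n x hx => by
      rw [hmem] at hx ⊢
      exact fun i hi => hx i (by omega))
    (fun n => by
      obtain ⟨y, hy⟩ := hne n
      obtain ⟨x, -, hx⟩ := hback n y hy
      exact ⟨x, (hmem _ _).2 fun i hi => ⟨hsub 0 (hx 0 (Nat.zero_le _)), hx i hi⟩⟩)
    (isCompact_Icc.of_isClosed_subset (hScl 0) (fun x hx => ((hmem _ _).1 hx 0 le_rfl).1)) hScl
  rw [Set.mem_iInter] at hq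
  exact ⟨q, ((hmem _ _).1 (hq 0) 0 le_rfl).1, fun n => ((hmem _ _).1 (hq n) n le_rfl).2⟩

lemma realize {a b : ℝ} {f : ℝ → ℝ} (hf : ContinuousOn f (Set.Icc a b))
    (hm : Set.MapsTo f (Set.Icc a b) (Set.Icc a b)) (h2 : NoTwo a b f) {p : ℝ}
    (hp : p ∈ Set.Icc a b) (hfp : f p = p) (hc : Cov a b f p) (s : ℕ → SignType)
    (hs : ∀ n, s n = 0 → s (n + 1) = 0) :
    ∃ q ∈ Set.Icc a b, HasSigns s (fun n => f^[n] q) := by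
  choose K θ hθ hK using cov_pieces hf hp hfp hc
  -- radii
  let e : ℕ → {r : ℝ // 0 < r} := fun n => Nat.rec ⟨1, one_pos⟩
    (fun n r => ⟨min (θ (s n) r.1 r.2) (1 / ((n : ℝ) + 1)),
      lt_min (hθ _ _ _) (by positivity)⟩) n
  have he : ∀ n, (e (n + 1)).1 = min (θ (s n) (e n).1 (e n).2) (1 / ((n : ℝ) + 1)) := fun n => rfl
  obtain ⟨q, hq, hqK⟩ := shadow hf hm (fun n => K (s n) (e n).1 (e n).2)
    (fun n => (hK _ _ _).1) (fun n => (hK _ _ _).2.1) (fun n => (hK _ _ _).2.2.1) (by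
      intro n
      by_cases h0 : s n = 0
      · have h1 := (hK (s n) _ (e n).2).2.2.2.2.2.2.1 h0
        have h3 := (hK (s (n + 1)) _ (e (n + 1)).2).2.2.2.2.2.2.1 (hs n h0)
        simp only [h1, h3]
        simp [hfp]
      · refine subset_trans ?_ ((hK (s n) _ (e n).2).2.2.2.2.2.2.2 h0)
        refine subset_trans (hK (s (n + 1)) _ (e (n + 1)).2).2.2.2.1 ?_
        have : (e (n + 1)).1 ≤ θ (s n) (e n).1 (e n).2 := by rw [he]; exact min_le_left _ _
        exact Set.Icc_subset_Icc (by linarith) (by linarith))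
  have hclose : ∀ n : ℕ, f^[n + 1] q ∈ Set.Icc (p - 1 / ((n : ℝ) + 1)) (p + 1 / ((n : ℝ) + 1)) := by
    intro n
    have h1 := (hK _ _ _).2.2.2.1 (hqK (n + 1))
    have : (e (n + 1)).1 ≤ 1 / ((n : ℝ) + 1) := by rw [he]; exact min_le_right _ _
    exact ⟨by linarith [h1.1], by linarith [h1.2]⟩
  -- late points are arbitrarily close to `p`
  have hlate : ∀ (m : ℕ) (r : ℝ), 0 < r → ∃ n, m < n ∧ |f^[n] q - p| < r := by
    intro m r hr
    obtain ⟨k, hk⟩ := exists_nat_one_div_lt hr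
    refine ⟨max m k + 1, by omega, ?_⟩
    have h1 := hclose (max m k)
    have : 1 / (((max m k : ℕ) : ℝ) + 1) ≤ 1 / ((k : ℝ) + 1) :=
      one_div_le_one_div_of_le (by positivity) (by
        have : (k : ℝ) ≤ ((max m k : ℕ) : ℝ) := by exact_mod_cast le_max_right m k
        linarith)
    rw [abs_lt]
    exact ⟨by linarith [h1.1], by linarith [h1.2]⟩
  refine ⟨q, hq, fun m n hmn => ⟨fun h => ?_, fun h => ?_, fun h => ?_⟩⟩
  · have hlt : f^[m] q < p := (hK _ _ _).2.2.2.2.1 h (hqK m)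
    obtain ⟨k, hk, hkp⟩ := hlate m (p - f^[m] q) (by linarith)
    rw [abs_lt] at hkp
    apply orbit_up hf hm h2 hq hmn
    by_contra hcon
    rcases (not_lt.1 hcon).lt_or_eq with h' | h'
    · linarith [orbit_down hf hm h2 hq hk h']
    · linarith [iter_fixed h' hk.le]
  · have hlt : p < f^[m] q := (hK _ _ _).2.2.2.2.2.1 h (hqK m)
    obtain ⟨k, hk, hkp⟩ := hlate m (f^[m] q - p) (by linarith)
    rw [abs_lt] at hkp
    apply orbit_down hf hm h2 hq hmn
    by_contra hcon
    rcases (not_lt.1 hcon).lt_or_eq with h' | h'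
    · linarith [orbit_up hf hm h2 hq hk h']
    · linarith [iter_fixed h'.symm hk.le]
  · have hmp : f^[m] q ∈ ({p} : Set ℝ) := by
      rw [← (hK (s m) _ (e m).2).2.2.2.2.2.2.1 h]; exact hqK m
    have hmp : f^[m] q = p := hmp
    exact (iter_fixed (by rw [hmp, hfp]) hmn.le).symm

/-- The model map for the word RRLLRRLL... -/
noncomputable def gmod (x : ℝ) : ℝ := x / 2 * Real.cos (Real.pi * (Real.log x / Real.log 2))

lemma gmod_abs (x : ℝ) : |gmod x| ≤ |x| / 2 := by
  unfold gmod
  rw [abs_mul, abs_div, abs_two]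
  exact mul_le_of_le_one_right (by positivity) (Real.abs_cos_le_one _)

lemma gmod_cont : Continuous gmod := by
  rw [continuous_iff_continuousAt]
  intro x
  by_cases hx : x = 0
  · subst hx
    have h0 : gmod 0 = 0 := by simp [gmod]
    rw [ContinuousAt, h0]
    refine squeeze_zero_norm (fun t => gmod_abs t) ?_
    have : Continuous fun t : ℝ => |t| / 2 := by fun_prop
    simpa using this.tendsto 0
  · unfold gmod
    have := Real.continuousAt_log hx
    fun_prop

lemma gmod_pow (n : ℕ) : gmod ((1 / 2) ^ n) = (-1) ^ n * (1 / 2) ^ (n + 1) ∧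
    gmod (-(1 / 2) ^ n) = -((-1) ^ n * (1 / 2) ^ (n + 1)) := by
  have hl : Real.pi * (Real.log ((1 / 2 : ℝ) ^ n) / Real.log 2) = -(n * Real.pi) := by
    have : Real.log 2 ≠ 0 := (Real.log_pos (by norm_num)).ne'
    rw [Real.log_pow, one_div, Real.log_inv]
    field_simp
  constructor
  · rw [gmod, hl, Real.cos_neg, Real.cos_nat_mul_pi]; ring
  · rw [gmod, Real.log_neg_eq_log, hl, Real.cos_neg, Real.cos_nat_mul_pi]; ring

lemma gmod_orbit (k : ℕ) : gmod^[4 * k] (-1) = -(1 / 2) ^ (4 * k) ∧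
    gmod^[4 * k + 1] (-1) = -(1 / 2) ^ (4 * k + 1) ∧
    gmod^[4 * k + 2] (-1) = (1 / 2) ^ (4 * k + 2) ∧
    gmod^[4 * k + 3] (-1) = (1 / 2) ^ (4 * k + 3) := by
  have e0 : (-1 : ℝ) ^ (4 * k) = 1 := Even.neg_one_pow ⟨2 * k, by ring⟩
  have step : ∀ k : ℕ, gmod^[4 * k] (-1) = -(1 / 2) ^ (4 * k) →
      gmod^[4 * k + 1] (-1) = -(1 / 2) ^ (4 * k + 1) ∧
      gmod^[4 * k + 2] (-1) = (1 / 2) ^ (4 * k + 2) ∧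
      gmod^[4 * k + 3] (-1) = (1 / 2) ^ (4 * k + 3) ∧
      gmod^[4 * (k + 1)] (-1) = -(1 / 2) ^ (4 * (k + 1)) := by
    intro k h
    have e0 : (-1 : ℝ) ^ (4 * k) = 1 := Even.neg_one_pow ⟨2 * k, by ring⟩
    have h1 : gmod^[4 * k + 1] (-1) = -(1 / 2) ^ (4 * k + 1) := by
      rw [Function.iterate_succ_apply', h, (gmod_pow _).2, e0]; ring
    have h2 : gmod^[4 * k + 2] (-1) = (1 / 2) ^ (4 * k + 2) := by
      rw [Function.iterate_succ_apply', h1, (gmod_pow _).2, pow_succ (-1 : ℝ), e0]; ring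
    have h3 : gmod^[4 * k + 3] (-1) = (1 / 2) ^ (4 * k + 3) := by
      rw [Function.iterate_succ_apply', h2, (gmod_pow _).1, pow_add (-1 : ℝ), e0]; ring
    have h4 : gmod^[4 * (k + 1)] (-1) = -(1 / 2) ^ (4 * (k + 1)) := by
      rw [show 4 * (k + 1) = (4 * k + 3) + 1 by ring, Function.iterate_succ_apply', h3,
        (gmod_pow _).1, pow_add (-1 : ℝ), e0]; ring
    exact ⟨h1, h2, h3, h4⟩
  have base : ∀ k : ℕ, gmod^[4 * k] (-1) = -(1 / 2) ^ (4 * k) := by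
    intro k
    induction k with
    | zero => simp
    | succ k ih => exact (step k ih).2.2.2
  have := step k (base k)
  exact ⟨base k, this.1, this.2.1, this.2.2.1⟩

lemma universal_forces {a b : ℝ} {f : ℝ → ℝ} (hf : ContinuousOn f (Set.Icc a b))
    (hm : Set.MapsTo f (Set.Icc a b) (Set.Icc a b)) (hu : IsUniversalF1 a b f) :
    ∃ p ∈ Set.Icc a b, f p = p ∧ Cov a b f p := by
  obtain ⟨q, hq, hpat⟩ := hu (-1) 1 (by norm_num) gmod gmod_cont.continuousOn
    (by
      intro x hx
      have h1 := gmod_abs x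
      have h2 : |x| ≤ 1 := abs_le.2 hx
      exact abs_le.1 (by linarith))
    (by
      rintro ⟨x, -, y, -, hxy, h1, h2⟩
      have h3 := gmod_abs x
      have h4 := gmod_abs y
      rw [h1] at h3
      rw [h2] at h4
      have h5 := abs_nonneg x
      have h6 := abs_nonneg y
      have hx0 : x = 0 := abs_eq_zero.1 (by linarith)
      have hy0 : y = 0 := abs_eq_zero.1 (by linarith)
      exact hxy (by rw [hx0, hy0]))
    (-1) (by constructor <;> norm_num)
  have hI : ∀ n, f^[n] q ∈ Set.Icc a b := iter_mem hm hq
  set A : ℕ → ℝ := fun k => f^[4 * k] q with hA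
  set B : ℕ → ℝ := fun k => f^[4 * k + 1] q with hB
  set C : ℕ → ℝ := fun k => f^[4 * k + 2] q with hC
  set D : ℕ → ℝ := fun k => f^[4 * k + 3] q with hD
  have fA : ∀ k, f (A k) = B k := fun k => (Function.iterate_succ_apply' f _ q).symm
  have fB : ∀ k, f (B k) = C k := fun k => (Function.iterate_succ_apply' f _ q).symm
  have fC : ∀ k, f (C k) = D k := fun k => (Function.iterate_succ_apply' f _ q).symm
  have fD : ∀ k, f (D k) = A (k + 1) := fun k => (Function.iterate_succ_apply' f _ q).symm
  have hpow : ∀ m n : ℕ, m < n → ((1 : ℝ) / 2) ^ n < (1 / 2) ^ m := fun m n h =>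
    pow_lt_pow_right_of_lt_one₀ (by norm_num) (by norm_num) h
  have AB : ∀ k, A k < B k := fun k => (hpat _ _).1 (by
    rw [(gmod_orbit k).1, (gmod_orbit k).2.1]; exact neg_lt_neg (hpow _ _ (by omega)))
  have BA : ∀ k, B k < A (k + 1) := fun k => (hpat _ _).1 (by
    rw [(gmod_orbit (k + 1)).1, (gmod_orbit k).2.1]; exact neg_lt_neg (hpow _ _ (by omega)))
  have DC : ∀ k, D k < C k := fun k => (hpat _ _).1 (by
    rw [(gmod_orbit k).2.2.1, (gmod_orbit k).2.2.2]; exact hpow _ _ (by omega))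
  have CD : ∀ k, C (k + 1) < D k := fun k => (hpat _ _).1 (by
    rw [(gmod_orbit (k + 1)).2.2.1, (gmod_orbit k).2.2.2]; exact hpow _ _ (by omega))
  have Amono : StrictMono A := strictMono_nat_of_lt_succ fun k => (AB k).trans (BA k)
  have Canti : StrictAnti C := strictAnti_nat_of_succ_lt fun k => (CD k).trans (DC k)
  have bddA : BddAbove (Set.range A) := ⟨b, by rintro _ ⟨k, rfl⟩; exact (hI _).2⟩
  have bddC : BddBelow (Set.range C) := ⟨a, by rintro _ ⟨k, rfl⟩; exact (hI _).1⟩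
  obtain ⟨p, hAp⟩ : ∃ p, Filter.Tendsto A Filter.atTop (nhds p) :=
    ⟨_, tendsto_atTop_ciSup Amono.monotone bddA⟩
  obtain ⟨r, hCr⟩ : ∃ r, Filter.Tendsto C Filter.atTop (nhds r) :=
    ⟨_, tendsto_atTop_ciInf Canti.antitone bddC⟩
  have hBp : Filter.Tendsto B Filter.atTop (nhds p) :=
    tendsto_of_tendsto_of_tendsto_of_le_of_le hAp (hAp.comp (Filter.tendsto_add_atTop_nat 1))
      (fun k => (AB k).le) (fun k => (BA k).le)
  have hpI : p ∈ Set.Icc a b := isClosed_Icc.mem_of_tendsto hAp (Filter.Eventually.of_forall fun k => hI _)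
  have lim : ∀ X : ℕ → ℝ, (∀ k, X k ∈ Set.Icc a b) → Filter.Tendsto X Filter.atTop (nhds p) →
      Filter.Tendsto (fun k => f (X k)) Filter.atTop (nhds (f p)) := fun X hX hXp =>
    (hf p hpI).tendsto.comp (tendsto_nhdsWithin_iff.2 ⟨hXp, Filter.Eventually.of_forall hX⟩)
  have hfp : f p = p := tendsto_nhds_unique (lim A (fun k => hI _) hAp) (by simpa only [fA] using hBp)
  have hfr : f p = r := tendsto_nhds_unique (lim B (fun k => hI _) hBp) (by simpa only [fB] using hCr)
  obtain rfl : p = r := hfp.symm.trans hfr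
  have Alt : ∀ k, A k < p := fun k =>
    lt_of_lt_of_le (Amono (Nat.lt_succ_self k)) (Amono.monotone.ge_of_tendsto hAp _)
  have Clt : ∀ k, p < C k := fun k =>
    lt_of_le_of_lt (Canti.antitone.le_of_tendsto hCr _) (Canti (Nat.lt_succ_self k))
  have Blt : ∀ k, B k < p := fun k => (BA k).trans (Alt _)
  have Dlt : ∀ k, p < D k := fun k => (Clt _).trans (CD k)
  refine ⟨p, hpI, hfp, fun ε hε => ?_⟩
  obtain ⟨k, hk1, hk2⟩ := ((hAp.eventually (lt_mem_nhds (show p - ε < p by linarith))).and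
    (hCr.eventually (gt_mem_nhds (show p < p + ε by linarith)))).exists
  obtain ⟨θ₁, hθ₁, h1⟩ := cover_uIcc hf (p := p) (u := A k) (v := B k) (hI _) (hI _)
    (by rw [fA]; exact Blt k) (by rw [fB]; exact Clt k)
  obtain ⟨θ₂, hθ₂, h2⟩ := cover_uIcc hf (p := p) (u := D k) (v := C k) (hI _) (hI _)
    (by rw [fD]; exact Alt _) (by rw [fC]; exact Dlt k)
  have hk3 := AB k
  have hk4 := DC k
  have hk5 := Blt k
  have hk6 := Dlt k
  refine ⟨min θ₁ θ₂, lt_min hθ₁ hθ₂, ?_, ?_⟩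
  · refine (Set.Icc_subset_Icc ?_ ?_).trans (h2.trans (Set.image_mono (Set.subset_inter
      (Set.uIcc_subset_Icc ⟨hk6.le, by linarith⟩ ⟨by linarith, hk2.le⟩)
      (Set.uIcc_subset_Icc (hI _) (hI _)))))
    · linarith [min_le_right θ₁ θ₂]
    · linarith [min_le_right θ₁ θ₂]
  · refine (Set.Icc_subset_Icc ?_ ?_).trans (h1.trans (Set.image_mono (Set.subset_inter
      (Set.uIcc_subset_Icc ⟨hk1.le, by linarith⟩ ⟨by linarith, hk5.le⟩)
      (Set.uIcc_subset_Icc (hI _) (hI _)))))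
    · linarith [min_le_left θ₁ θ₂]
    · linarith [min_le_left θ₁ θ₂]

/-- Characterization of universal maps in the first Sharkovsky class: some fixed
point p has the property that images of arbitrarily small one-sided neighbourhoods
of p cover two-sided neighbourhoods of p. -/
theorem stmt_16 (a b : ℝ) (hab : a ≤ b) (f : ℝ → ℝ)
    (hf : ContinuousOn f (Set.Icc a b))
    (hmaps : Set.MapsTo f (Set.Icc a b) (Set.Icc a b))
    (hno2 : ¬ ∃ x ∈ Set.Icc a b, ∃ y ∈ Set.Icc a b, x ≠ y ∧ f x = y ∧ f y = x) :
    IsUniversalF1 a b f ↔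
    ∃ p ∈ Set.Icc a b, f p = p ∧
      ∀ ε > (0 : ℝ), ∃ δ > (0 : ℝ),
        Set.Icc (p - δ) (p + δ) ⊆ f '' (Set.Icc p (p + ε) ∩ Set.Icc a b) ∧
        Set.Icc (p - δ) (p + δ) ⊆ f '' (Set.Icc (p - ε) p ∩ Set.Icc a b) := by
  constructor
  · exact fun hu => universal_forces hf hmaps hu
  · rintro ⟨p, hp, hfp, hc⟩ c d _ g hg hgm hg2 r hr
    have hgs := orbit_hasSigns hg hgm hg2 hr
    obtain ⟨q, hq, hqs⟩ := realize hf hmaps hno2 hp hfp hc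
      (fun n => SignType.sign (g (g^[n] r) - g^[n] r)) (fun n h => by
      rw [sign_eq_zero_iff, sub_eq_zero] at h ⊢
      rw [Function.iterate_succ_apply', h, h])
    exact ⟨q, hq, fun m n => HasSigns.pattern hgs hqs m n⟩
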